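/- Let k ≥ 2 be an integer, let ω = exp(2πi/k) ∈ ℂ, and let A be a complex n×n matrix with n ≥ k such that tr(A) = α_0 + α_1·ω + α_2·ω² + … + α_{k−1}·ω^{k−1}, where each α_i is an integer with α_i > 3, and rank(A) = k. Then A is a sum of (γ_0 + γ_1 + … + γ_{k−1} + 2)·k many (k+1)-potent matrices, where γ_i = (α_i − 2)/2 if α_i is even and γ_i = (α_i − 3)/2 + 3 if α_i is odd. -/

import Mathlib

open Matrix

section RankOneDecomposition

variable {K ι : Type*} [Field K] [Fintype ι]

/-- Wedderburn's rank reduction. -/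
theorem Matrix.rank_sub_vecMulVec_lt {A : Matrix ι ι K} {x y : ι → K}
    (h : y ⬝ᵥ A *ᵥ x ≠ 0) :
    (A - vecMulVec (A *ᵥ x) ((y ⬝ᵥ A *ᵥ x)⁻¹ • (y ᵥ* A))).rank < A.rank := by
  set B := A - vecMulVec (A *ᵥ x) ((y ⬝ᵥ A *ᵥ x)⁻¹ • (y ᵥ* A)) with hB
  have hmul (z : ι → K) :
      B *ᵥ z = A *ᵥ z - ((y ⬝ᵥ A *ᵥ x)⁻¹ * (y ⬝ᵥ A *ᵥ z)) • A *ᵥ x := by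
    rw [hB, sub_mulVec, vecMulVec_mulVec, smul_dotProduct, ← dotProduct_mulVec, op_smul_eq_smul,
      smul_eq_mul]
  have hlt : LinearMap.ker A.mulVecLin < LinearMap.ker B.mulVecLin := by
    refine lt_of_le_of_ne (fun z hz => ?_) fun heq => ?_
    · rw [LinearMap.mem_ker, mulVecLin_apply] at hz ⊢
      simp [hmul, hz]
    · have hx : x ∈ LinearMap.ker B.mulVecLin := by
        rw [LinearMap.mem_ker, mulVecLin_apply, hmul, inv_mul_cancel₀ h, one_smul, sub_self]
      rw [← heq, LinearMap.mem_ker, mulVecLin_apply] at hx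
      simp [hx] at h
  have hker := Submodule.finrank_lt_finrank_of_lt hlt
  have hA := A.mulVecLin.finrank_range_add_finrank_ker
  have hB' := B.mulVecLin.finrank_range_add_finrank_ker
  change Module.finrank K (LinearMap.range B.mulVecLin) <
    Module.finrank K (LinearMap.range A.mulVecLin)
  lia

theorem Matrix.sub_vecMulVec_sq_ne_smul {A : Matrix ι ι K} (hA : 1 < A.rank) {c t : K}
    (hAA : A * A = c • A) (hct : c ≠ t) (ht : t ≠ 0) {x z : ι → K} (hz : A *ᵥ x ⬝ᵥ z = t)
    (d : K) :
    (A - vecMulVec (A *ᵥ x) z) * (A - vecMulVec (A *ᵥ x) z) ≠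
      d • (A - vecMulVec (A *ᵥ x) z) := by
  intro h
  have hx : A *ᵥ A *ᵥ x = c • A *ᵥ x := by rw [mulVec_mulVec, hAA, smul_mulVec]
  rw [sub_mul, mul_sub, mul_sub, hAA, mul_vecMulVec, vecMulVec_mul, vecMulVec_mul_vecMulVec, hx,
    dotProduct_comm, hz, smul_vecMulVec, vecMulVec_smul] at h
  have hrow : (c - d) • A = vecMulVec (A *ᵥ x) ((c - d - t) • z + z ᵥ* A) := by
    rw [vecMulVec_add, vecMulVec_smul]
    linear_combination (norm := module) h
  have hcd : c = d := by
    by_contra hne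
    have hA' : A = vecMulVec (A *ᵥ x) ((c - d)⁻¹ • ((c - d - t) • z + z ᵥ* A)) := by
      rw [vecMulVec_smul, ← hrow, smul_smul, inv_mul_cancel₀ (sub_ne_zero.mpr hne), one_smul]
    have := rank_vecMulVec_le (A *ᵥ x) ((c - d)⁻¹ • ((c - d - t) • z + z ᵥ* A))
    rw [← hA'] at this
    lia
  rw [hcd, sub_self, zero_smul, eq_comm, vecMulVec_eq_zero] at hrow
  have hAx : A *ᵥ x ≠ 0 := by
    intro h0
    rw [h0, zero_dotProduct] at hz
    exact ht hz.symm
  have hzA : z ᵥ* A = t • z := by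
    have := hrow.resolve_left hAx
    linear_combination (norm := module) this
  have hzx : c * t = t * t := by
    have := congrArg (fun w => w ⬝ᵥ A *ᵥ x) hzA
    simpa [← dotProduct_mulVec, hx, dotProduct_comm z, hz] using this
  exact hct (mul_right_cancel₀ ht hzx)

variable [DecidableEq ι]

theorem Matrix.vecMulVec_pow_succ (u v : ι → K) (k : ℕ) :
    vecMulVec u v ^ (k + 1) = (u ⬝ᵥ v) ^ k • vecMulVec u v := by
  induction k with
  | zero => simp
  | succ k ih =>
    rw [_root_.pow_succ, ih, smul_mul_assoc, vecMulVec_mul_vecMulVec, vecMulVec_smul, smul_smul,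
      dotProduct_comm v u, _root_.pow_succ]

theorem exists_dotProduct_eq {v : ι → K} (hv : v ≠ 0) (s : K) : ∃ w : ι → K, w ⬝ᵥ v = s := by
  obtain ⟨i, hi⟩ := Function.ne_iff.mp hv
  refine ⟨Pi.single i (s / v i), ?_⟩
  rw [single_dotProduct, div_mul_cancel₀ _ hi]

theorem exists_dotProduct_ne_zero_of_notMem_span {w b : ι → K}
    (h : w ∉ Submodule.span K {b}) : ∃ y : ι → K, y ⬝ᵥ b = 0 ∧ y ⬝ᵥ w ≠ 0 := by
  obtain ⟨f, hf, hb⟩ := Submodule.exists_dual_map_eq_bot_of_notMem h inferInstance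
  obtain ⟨y, rfl⟩ := (dotProductEquiv K ι).surjective f
  refine ⟨y, ?_, hf⟩
  have : dotProductEquiv K ι y b ∈ (Submodule.span K {b}).map (dotProductEquiv K ι y) :=
    Submodule.mem_map_of_mem (Submodule.mem_span_singleton_self b)
  rw [hb] at this
  simpa using this

theorem Matrix.exists_eq_vecMulVec_of_rank_le_one [Nonempty ι] {A : Matrix ι ι K}
    (hA : A.rank ≤ 1) : ∃ u v : ι → K, v ≠ 0 ∧ A = vecMulVec u v := by
  by_cases h0 : A = 0
  · exact ⟨0, 1, one_ne_zero, by simp [h0]⟩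
  obtain ⟨b, hb⟩ := finrank_le_one_iff.mp hA
  choose c hc using fun i => hb ⟨A *ᵥ Pi.single i 1, by exact ⟨_, rfl⟩⟩
  have hAc : A = vecMulVec (b : ι → K) c := by
    ext i j
    have := congrFun (congrArg Subtype.val (hc j)) i
    simpa [vecMulVec_apply, mul_comm] using this.symm
  refine ⟨b, c, ?_, hAc⟩
  rintro rfl
  exact h0 (by rw [hAc]; ext; simp [vecMulVec_apply])

/-- Either the rank of `A` drops after subtracting some rank-one matrix of trace `t`, or `A` acts
on its range as a scalar other than `t`. -/
theorem Matrix.exists_rank_sub_vecMulVec_lt_or (A : Matrix ι ι K) (hA : A ≠ 0) (t : K) :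
    (∃ u v : ι → K, u ⬝ᵥ v = t ∧ (A - vecMulVec u v).rank < A.rank) ∨
      ∃ c : K, A * A = c • A ∧ c ≠ t := by
  by_cases h : ∃ x y : ι → K, y ⬝ᵥ (A *ᵥ A *ᵥ x - t • A *ᵥ x) = 0 ∧ y ⬝ᵥ A *ᵥ x ≠ 0
  · obtain ⟨x, y, hxy, hne⟩ := h
    refine .inl ⟨_, _, ?_, rank_sub_vecMulVec_lt hne⟩
    rw [dotProduct_sub, dotProduct_smul, sub_eq_zero, smul_eq_mul] at hxy
    rw [dotProduct_comm, smul_dotProduct, ← dotProduct_mulVec, hxy, smul_eq_mul]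
    field_simp
  · have hspan (x : ι → K) : ∃ s : K, s • (A *ᵥ A *ᵥ x - t • A *ᵥ x) = A *ᵥ x := by
      by_contra hx
      rw [← Submodule.mem_span_singleton] at hx
      obtain ⟨y, hy⟩ := exists_dotProduct_ne_zero_of_notMem_span hx
      exact h ⟨x, y, hy⟩
    let f : LinearMap.range A.mulVecLin →ₗ[K] LinearMap.range A.mulVecLin :=
      A.mulVecLin.restrict fun x _ => ⟨x, rfl⟩
    obtain ⟨c, hc⟩ : ∃ c : K, f = c • 1 := by
      refine LinearMap.exists_eq_smul_id_of_forall_notLinearIndependent fun ⟨w, x, hx⟩ hli => ?_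
      obtain ⟨s, hs⟩ := hspan x
      rw [mulVecLin_apply] at hx
      subst hx
      have := LinearIndependent.pair_iff.mp hli (1 + s * t) (-s) (Subtype.ext ?_)
      · obtain ⟨h1, h2⟩ := this
        simp [neg_eq_zero.mp h2] at h1
      · change (1 + s * t) • A *ᵥ x + (-s) • A *ᵥ A *ᵥ x = 0
        linear_combination (norm := module) -hs
    have hcx (x : ι → K) : A *ᵥ A *ᵥ x = c • A *ᵥ x :=
      congrArg Subtype.val (LinearMap.congr_fun hc ⟨A *ᵥ x, x, rfl⟩)
    refine .inr ⟨c, ?_, ?_⟩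
    · refine ext_of_mulVec_single fun i => ?_
      rw [← mulVec_mulVec, hcx, smul_mulVec]
    · rintro rfl
      refine hA (ext_of_mulVec_single fun i => ?_)
      obtain ⟨s, hs⟩ := hspan (Pi.single i 1)
      rw [hcx, sub_self, smul_zero] at hs
      rw [← hs, zero_mulVec]

/-- `A` is a sum of `m` matrices that are `(k+1)`-potent. -/
def IsSumOfPotents (k m : ℕ) (A : Matrix ι ι K) : Prop :=
  ∃ L : List (Matrix ι ι K), L.length = m ∧ (∀ E ∈ L, E ^ (k + 1) = E) ∧ A = L.sum

theorem IsSumOfPotents.cons {k m : ℕ} {A : Matrix ι ι K} {u v : ι → K}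
    (huv : (u ⬝ᵥ v) ^ k = 1) (h : IsSumOfPotents k m (A - vecMulVec u v)) :
    IsSumOfPotents k (m + 1) A := by
  obtain ⟨L, hlen, hL, hsum⟩ := h
  refine ⟨vecMulVec u v :: L, by simp [hlen], ?_, ?_⟩
  · simpa [vecMulVec_pow_succ, huv] using hL
  · rw [List.sum_cons, ← hsum, add_sub_cancel]

theorem isSumOfPotents_vecMulVec {k : ℕ} {v : ι → K} (hv : v ≠ 0) (t : List K) (ht : t ≠ [])
    (htk : ∀ s ∈ t, s ^ k = 1) (u : ι → K) (huv : u ⬝ᵥ v = t.sum) :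
    IsSumOfPotents k t.length (vecMulVec u v) := by
  induction t generalizing u with
  | nil => exact absurd rfl ht
  | cons s t ih =>
    by_cases ht' : t = []
    · subst ht'
      have hs : u ⬝ᵥ v = s := by simpa using huv
      have hsk : s ^ k = 1 := htk s (by simp)
      exact ⟨[vecMulVec u v], rfl, by simp [vecMulVec_pow_succ, hs, hsk], by simp⟩
    · obtain ⟨w, hw⟩ := exists_dotProduct_eq hv s
      refine .cons (u := w) (v := v) (hw ▸ htk s (by simp)) ?_
      rw [← sub_vecMulVec]
      refine ih ht' (fun a ha => htk a (by simp [ha])) _ ?_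
      rw [sub_dotProduct, huv, hw, List.sum_cons, add_sub_cancel_left]

/-- A matrix of rank at most `r + 1` whose trace is a sum of at least `2 * r + 1` many `k`-th roots
of unity is a sum of as many `(k+1)`-potent matrices. -/
theorem isSumOfPotents_of_trace_eq_sum [Nonempty ι] {k : ℕ} (hk : k ≠ 0) (r : ℕ)
    (A : Matrix ι ι K) (t : List K) (htk : ∀ s ∈ t, s ^ k = 1) (hA : A.rank ≤ r + 1)
    (hlen : 2 * r + 1 ≤ t.length) (htr : A.trace = t.sum) : IsSumOfPotents k t.length A := by
  induction r generalizing A t with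
  | zero =>
    obtain ⟨u, v, hv, rfl⟩ := exists_eq_vecMulVec_of_rank_le_one hA
    refine isSumOfPotents_vecMulVec hv t ?_ htk u (by rwa [trace_vecMulVec] at htr)
    rintro rfl
    simp at hlen
  | succ r ih =>
    by_cases hr : A.rank ≤ r + 1
    · exact ih A t htk hr (by lia) htr
    have hA0 : A ≠ 0 := by
      rintro rfl
      simp at hr
    obtain ⟨t₁, t, rfl⟩ : ∃ s t', t = s :: t' := List.exists_cons_of_length_pos (by lia)
    obtain ⟨t₂, t, rfl⟩ : ∃ s t', t = s :: t' :=
      List.exists_cons_of_length_pos (by simp at hlen; lia)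
    simp only [List.length_cons, List.sum_cons] at hlen htr ⊢
    have ht₁ : t₁ ^ k = 1 := htk _ (by simp)
    have ht₂ : t₂ ^ k = 1 := htk _ (by simp)
    have ht₁_ne : t₁ ≠ 0 := by
      rintro rfl
      simp [hk] at ht₁
    rcases A.exists_rank_sub_vecMulVec_lt_or hA0 t₁ with ⟨u, v, huv, hlt⟩ | ⟨c, hAA, hct⟩
    · refine .cons (u := u) (v := v) (huv ▸ ht₁) ?_
      refine ih _ (t₂ :: t) (fun a ha => htk a (List.mem_cons_of_mem _ ha)) (by lia)
        (by simp; lia) ?_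
      rw [trace_sub, trace_vecMulVec, htr, huv, List.sum_cons, add_sub_cancel_left]
    · obtain ⟨x, hx⟩ : ∃ x, A *ᵥ x ≠ 0 := by
        by_contra! h
        exact hA0 (ext_of_mulVec_single fun i => by rw [h, zero_mulVec])
      obtain ⟨z, hz⟩ := exists_dotProduct_eq hx t₁
      rw [dotProduct_comm] at hz
      have hne := sub_vecMulVec_sq_ne_smul (by lia) hAA hct ht₁_ne hz
      have hle : (A - vecMulVec (A *ᵥ x) z).rank ≤ A.rank := by
        have : A - vecMulVec (A *ᵥ x) z = A * (1 - vecMulVec x z) := by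
          rw [mul_sub, mul_one, mul_vecMulVec]
        rw [this]
        exact rank_mul_le_left _ _
      refine .cons (u := A *ᵥ x) (v := z) (hz ▸ ht₁) ?_
      rcases (A - vecMulVec (A *ᵥ x) z).exists_rank_sub_vecMulVec_lt_or
        (fun h => hne 0 (by simp [h])) t₂ with ⟨u, v, huv, hlt⟩ | ⟨d, hd, -⟩
      · refine .cons (u := u) (v := v) (huv ▸ ht₂) ?_
        refine ih _ t (fun a ha => htk a (by simp [ha])) (by lia) (by lia) ?_
        rw [trace_sub, trace_sub, trace_vecMulVec, trace_vecMulVec, htr, huv, hz]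
        ring
      · exact absurd hd (hne d)

theorem IsSumOfPotents.exists_fin {k m M : ℕ} {A : Matrix ι ι K} (h : IsSumOfPotents k m A)
    (hM : m ≤ M) :
    ∃ E : Fin M → Matrix ι ι K, (∀ i, E i ^ (k + 1) = E i) ∧ A = ∑ i, E i := by
  obtain ⟨L, rfl, hL, rfl⟩ := h
  obtain ⟨d, rfl⟩ := Nat.exists_eq_add_of_le hM
  refine ⟨Fin.append L.get fun _ => 0, fun i => ?_, ?_⟩
  · refine Fin.addCases (fun i => ?_) (fun i => ?_) i
    · simpa using hL _ (List.getElem_mem i.2)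
    · simp
  · rw [Fin.sum_univ_add]
    simp

end RankOneDecomposition

theorem rank_k_sum_kpotent (k n : ℕ) (hk : 2 ≤ k) (hn : k ≤ n)
    (ω : ℂ) (hω : ω = Complex.exp (2 * Real.pi * Complex.I / k))
    (A : Matrix (Fin n) (Fin n) ℂ)
    (α : Fin k → ℤ) (hα : ∀ i, 3 < α i)
    (htr : A.trace = ∑ i : Fin k, (α i : ℂ) * ω ^ (i : ℕ))
    (hrank : A.rank = k)
    (N : ℤ)
    (hN : N = ((∑ i : Fin k,
        if Even (α i) then (α i - 2) / 2 else (α i - 3) / 2 + 3) + 2) * (k : ℤ)) :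
    ∃ E : Fin N.toNat → Matrix (Fin n) (Fin n) ℂ,
      (∀ i, E i ^ (k + 1) = E i) ∧ A = ∑ i, E i := by
  have hk0 : k ≠ 0 := by lia
  have : Nonempty (Fin n) := ⟨⟨0, by lia⟩⟩
  have hωk : ω ^ k = 1 := by
    rw [hω]
    exact (Complex.isPrimitiveRoot_exp k hk0).pow_eq_one
  let t : List ℂ := (List.ofFn fun i : Fin k => List.replicate (α i).toNat (ω ^ (i : ℕ))).flatten
  have hlen : (t.length : ℤ) = ∑ i, α i := by
    have : t.length = ∑ i, (α i).toNat := by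
      simp [t, List.length_flatten, List.map_ofFn, List.sum_ofFn]
    rw [this]
    push_cast
    exact Finset.sum_congr rfl fun i _ => Int.toNat_of_nonneg (by linarith [hα i])
  have hsum : t.sum = ∑ i : Fin k, (α i : ℂ) * ω ^ (i : ℕ) := by
    simp only [t, List.sum_flatten, List.map_ofFn, List.sum_ofFn]
    refine Finset.sum_congr rfl fun i _ => ?_
    have : (((α i).toNat : ℤ) : ℂ) = α i := by
      rw [Int.toNat_of_nonneg (by linarith [hα i])]
    rw [Function.comp_apply, List.sum_replicate, nsmul_eq_mul, ← this, Int.cast_natCast]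
  have htk : ∀ s ∈ t, s ^ k = 1 := by
    intro s hs
    simp only [t, List.mem_flatten, List.mem_ofFn] at hs
    obtain ⟨_, ⟨i, rfl⟩, hs⟩ := hs
    rw [List.eq_of_mem_replicate hs, ← pow_mul, mul_comm, pow_mul, hωk, one_pow]
  have hlow : 4 * (k : ℤ) ≤ ∑ i, α i := by
    have : ∑ _i : Fin k, (4 : ℤ) ≤ ∑ i, α i := Finset.sum_le_sum fun i _ => hα i
    simpa [mul_comm] using this
  have hγ : ∑ i, α i - 2 * k ≤ 2 * ∑ i : Fin k,
      if Even (α i) then (α i - 2) / 2 else (α i - 3) / 2 + 3 := by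
    have : ∑ i : Fin k, (α i - 2) ≤ ∑ i : Fin k,
        2 * if Even (α i) then (α i - 2) / 2 else (α i - 3) / 2 + 3 := by
      refine Finset.sum_le_sum fun i _ => ?_
      split_ifs with h
      · obtain ⟨b, hb⟩ := h
        lia
      · lia
    rw [← Finset.mul_sum, Finset.sum_sub_distrib] at this
    simpa [mul_comm] using this
  refine (isSumOfPotents_of_trace_eq_sum hk0 (k - 1) A t htk (by lia) (by lia)
    (htr.trans hsum.symm)).exists_fin ?_
  have hmN : (t.length : ℤ) ≤ N := by
    have hk2 : (2 : ℤ) ≤ k := by exact_mod_cast hk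
    rw [hlen, hN]
    nlinarith
  lia
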